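/- Convolution decreases Fisher information: for all positive definite n-qudit states ρ and σ (so that ρ ⊠ σ is also positive definite), J(ρ ⊠ σ) ≤ min{J(ρ), J(σ)}. -/

import Mathlib

open scoped BigOperators ComplexOrder Classical ENNReal
open Matrix

namespace PaperQI

/-- The computational-basis index set `ℤ_d^n` for an `n`-qudit system. -/
abbrev QV (d n : ℕ) := Fin n → ZMod d

/-- Matrices (linear operators) on the `n`-qudit Hilbert space `(ℂ^d)^{⊗ n}`,
written in the computational basis indexed by `ℤ_d^n`. -/
abbrev Mat (d n : ℕ) := Matrix (QV d n) (QV d n) ℂ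

/-- The character `ξ^z = exp(2πi z/d)` for `z ∈ ℤ_d`. -/
noncomputable def ch (d : ℕ) (z : ZMod d) : ℂ :=
  Complex.exp (2 * Real.pi * Complex.I * (z.val : ℂ) / (d : ℂ))

/-- Dot product on `ℤ_d^n`. -/
def qdot {d n : ℕ} (p k : QV d n) : ZMod d := ∑ i, p i * k i

/-- The `n`-qudit Weyl operator `w(p,q) = ⊗_i ξ^{-2⁻¹ p_i q_i} Z^{p_i} X^{q_i}`
(for odd prime `d`).  Its matrix entries are
`w(p,q)[k+q, k] = ξ^{p·k + 2⁻¹ p·q}`. -/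
noncomputable def weyl (d n : ℕ) [Fact (Nat.Prime d)] (p q : QV d n) : Mat d n :=
  Matrix.of fun k' k =>
    if k' = k + q then ch d (qdot p k + (2 : ZMod d)⁻¹ * qdot p q) else 0

/-- `ρ` is an `n`-qudit state: positive semidefinite with trace one. -/
def IsState (d n : ℕ) [Fact (Nat.Prime d)] (ρ : Mat d n) : Prop :=
  ρ.PosSemidef ∧ ρ.trace = 1

/-- The characteristic function `Ξ_ρ(p,q) = Tr[ρ w(-p,-q)]`. -/
noncomputable def xi (d n : ℕ) [Fact (Nat.Prime d)] (ρ : Mat d n)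
    (pq : QV d n × QV d n) : ℂ :=
  (ρ * weyl d n (-pq.1) (-pq.2)).trace

/-- The mean state `M(ρ) = d^{-n} ∑_{|Ξ_ρ(p,q)| = 1} Ξ_ρ(p,q) w(p,q)`. -/
noncomputable def meanState (d n : ℕ) [Fact (Nat.Prime d)] (ρ : Mat d n) : Mat d n :=
  ((d : ℂ) ^ n)⁻¹ •
    ∑ pq : QV d n × QV d n,
      if ‖xi d n ρ pq‖ = 1 then xi d n ρ pq • weyl d n pq.1 pq.2 else 0

/-- `ρ` is a minimal stabilizer-projection state (MSPS): for some `r ≤ n` there are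
mutually commuting Weyl operators `w(p_i,q_i)`, `i = 1,…,r`, whose labels generate a
subgroup of `V^n` of order `d^r`, and phases `x ∈ ℤ_d^r`, such that
`ρ = d^{-(n-r)} ∏_i ( (1/d) ∑_{k ∈ ℤ_d} (ξ^{x_i} w(p_i,q_i))^k )`. -/
noncomputable def IsMSPS (d n : ℕ) [Fact (Nat.Prime d)] (ρ : Mat d n) : Prop :=
  ∃ r : ℕ, r ≤ n ∧
    ∃ (p q : Fin r → QV d n) (x : Fin r → ZMod d),
      (∀ i j, Commute (weyl d n (p i) (q i)) (weyl d n (p j) (q j))) ∧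
      Nat.card (AddSubgroup.closure (Set.range fun i => (p i, q i)) :
        AddSubgroup (QV d n × QV d n)) = d ^ r ∧
      ρ = ((d : ℂ) ^ (n - r))⁻¹ •
        (List.ofFn fun i =>
          (d : ℂ)⁻¹ • ∑ k : ZMod d, (ch d (x i) • weyl d n (p i) (q i)) ^ k.val).prod

/-- The magic gap `MG(ρ) = 1 - max{|Ξ_ρ(p,q)| : Ξ_ρ(p,q) ≠ 0, |Ξ_ρ(p,q)| ≠ 1}`,
and `MG(ρ) = 0` if this set is empty. -/
noncomputable def magicGap (d n : ℕ) [Fact (Nat.Prime d)] (ρ : Mat d n) : ℝ :=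
  let s : Finset ℝ :=
    (Finset.univ.filter fun pq : QV d n × QV d n =>
      xi d n ρ pq ≠ 0 ∧ ‖xi d n ρ pq‖ ≠ 1).image
      fun pq => ‖xi d n ρ pq‖
  if h : s.Nonempty then 1 - s.max' h else 0

/-- Von Neumann entropy `H(ρ) = -∑ λ_i log λ_i` (natural log, eigenvalues of `ρ`),
with the convention `0 log 0 = 0`; junk value `0` on non-Hermitian matrices. -/
noncomputable def vnEnt {d n : ℕ} [Fact (Nat.Prime d)] (ρ : Mat d n) : ℝ :=
  if h : ρ.IsHermitian then -∑ i, h.eigenvalues i * Real.log (h.eigenvalues i) else 0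

/-- Rényi entropy `H_α` for `α ∈ [0,∞]`:  `H_0 = log rank`, `H_1 = H` (von Neumann),
`H_∞ = -log λ_max`, and `H_α = (1-α)⁻¹ log ∑ λ_i^α` otherwise. -/
noncomputable def renyiEnt {d n : ℕ} [Fact (Nat.Prime d)] (α : ℝ≥0∞) (ρ : Mat d n) : ℝ :=
  if h : ρ.IsHermitian then
    if α = 0 then Real.log (ρ.rank : ℝ)
    else if α = 1 then -∑ i, h.eigenvalues i * Real.log (h.eigenvalues i)
    else if α = ⊤ then -Real.log (⨆ i, h.eigenvalues i)
    else (1 - α.toReal)⁻¹ * Real.log (∑ i, h.eigenvalues i ^ α.toReal)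
  else 0

/-- Matrix logarithm on the support: `log ρ = U diag(log λ_i) U†` via the spectral
decomposition, with `log 0 = 0` on the kernel; junk value `0` off Hermitian matrices. -/
noncomputable def matLog {d n : ℕ} [Fact (Nat.Prime d)] (ρ : Mat d n) : Mat d n :=
  if h : ρ.IsHermitian then
    (h.eigenvectorUnitary : Mat d n) *
      Matrix.diagonal (fun i => (Real.log (h.eigenvalues i) : ℂ)) *
      star (h.eigenvectorUnitary : Mat d n)
  else 0

/-- Matrix real power on the support: `ρ^t = U diag(λ_i^t) U†`, with `0^t = 0` on the
kernel (for `t ≠ 0`); junk value `0` off Hermitian matrices. -/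
noncomputable def matRpow {d n : ℕ} [Fact (Nat.Prime d)] (ρ : Mat d n) (t : ℝ) : Mat d n :=
  if h : ρ.IsHermitian then
    (h.eigenvectorUnitary : Mat d n) *
      Matrix.diagonal (fun i => ((h.eigenvalues i ^ t : ℝ) : ℂ)) *
      star (h.eigenvectorUnitary : Mat d n)
  else 0

/-- Support inclusion `supp ρ ⊆ supp σ`, expressed as `ker σ ⊆ ker ρ`
(the correct notion for positive semidefinite matrices). -/
def suppLE {d n : ℕ} [Fact (Nat.Prime d)] (ρ σ : Mat d n) : Prop :=
  ∀ v : QV d n → ℂ, σ.mulVec v = 0 → ρ.mulVec v = 0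

/-- Relative entropy `D(ρ‖σ) = Tr[ρ(log ρ - log σ)]` when `supp ρ ⊆ supp σ`, else `+∞`. -/
noncomputable def relEnt {d n : ℕ} [Fact (Nat.Prime d)] (ρ σ : Mat d n) : EReal :=
  if suppLE ρ σ then (((ρ * (matLog ρ - matLog σ)).trace.re : ℝ) : EReal) else ⊤

/-- Sandwiched Rényi relative entropy
`D_α(ρ‖σ) = (α-1)⁻¹ log Tr[(σ^{(1-α)/(2α)} ρ σ^{(1-α)/(2α)})^α]` for `α ≠ 1`
(with `+∞` when `supp ρ ⊄ supp σ`), and `D_1 = D` the relative entropy. -/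
noncomputable def sandRenyi {d n : ℕ} [Fact (Nat.Prime d)] (α : ℝ) (ρ σ : Mat d n) :
    EReal :=
  if α = 1 then relEnt ρ σ
  else if suppLE ρ σ then
    let x : ℝ := (α - 1)⁻¹ * Real.log
      ((matRpow (matRpow σ ((1 - α) / (2 * α)) * ρ * matRpow σ ((1 - α) / (2 * α)))
        α).trace.re)
    (x : EReal)
  else ⊤

/-- The key unitary `U|i,j⟩ = |N g₁₁ i - N g₁₀ j, -N g₀₁ i + N g₀₀ j⟩`,
where `N = (det G)⁻¹` in `ℤ_d`. -/
noncomputable def convU (d n : ℕ) [Fact (Nat.Prime d)] (g00 g01 g10 g11 : ZMod d) :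
    Matrix (QV d n × QV d n) (QV d n × QV d n) ℂ :=
  Matrix.of fun kl ij =>
    if kl = ((fun a => (g00 * g11 - g01 * g10)⁻¹ * g11 * ij.1 a
                      - (g00 * g11 - g01 * g10)⁻¹ * g10 * ij.2 a : QV d n),
             (fun a => -((g00 * g11 - g01 * g10)⁻¹ * g01) * ij.1 a
                      + (g00 * g11 - g01 * g10)⁻¹ * g00 * ij.2 a : QV d n))
    then 1 else 0

/-- Tensor (Kronecker) product of two `n`-qudit operators, on the doubled system. -/
def kron {d n : ℕ} (ρ σ : Mat d n) : Matrix (QV d n × QV d n) (QV d n × QV d n) ℂ :=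
  Matrix.of fun ij kl => ρ ij.1 kl.1 * σ ij.2 kl.2

/-- Partial trace over the second `n`-qudit factor. -/
noncomputable def ptrB {d n : ℕ} [Fact (Nat.Prime d)]
    (M : Matrix (QV d n × QV d n) (QV d n × QV d n) ℂ) : Mat d n :=
  Matrix.of fun i i' => ∑ j : QV d n, M (i, j) (i', j)

/-- The convolution `ρ ⊠ σ = Tr_B[U (ρ ⊗ σ) U†]` with parameter matrix
`G = [g₀₀, g₀₁; g₁₀, g₁₁]`. -/
noncomputable def conv (d n : ℕ) [Fact (Nat.Prime d)] (g00 g01 g10 g11 : ZMod d)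
    (ρ σ : Mat d n) : Mat d n :=
  ptrB (convU d n g00 g01 g10 g11 * kron ρ σ * (convU d n g00 g01 g10 g11)ᴴ)

/-- The beam-splitter unitary `U_{s,t}|i,j⟩ = |s i + t j, t i - s j⟩`. -/
noncomputable def bsU (d n : ℕ) [Fact (Nat.Prime d)] (s t : ZMod d) :
    Matrix (QV d n × QV d n) (QV d n × QV d n) ℂ :=
  Matrix.of fun kl ij =>
    if kl = ((fun a => s * ij.1 a + t * ij.2 a : QV d n),
             (fun a => t * ij.1 a - s * ij.2 a : QV d n))
    then 1 else 0

/-- The beam-splitter convolution `ρ ⊠_{s,t} σ = Tr_B[U_{s,t} (ρ ⊗ σ) U_{s,t}†]`. -/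
noncomputable def bsConv (d n : ℕ) [Fact (Nat.Prime d)] (s t : ZMod d)
    (ρ σ : Mat d n) : Mat d n :=
  ptrB (bsU d n s t * kron ρ σ * (bsU d n s t)ᴴ)

/-- Iterated self-convolution: `⊠^0 ρ = ρ` and `⊠^{N+1} ρ = (⊠^N ρ) ⊠ ρ`. -/
noncomputable def bsIter (d n : ℕ) [Fact (Nat.Prime d)] (s t : ZMod d) :
    ℕ → Mat d n → Mat d n
  | 0, ρ => ρ
  | N + 1, ρ => bsConv d n s t (bsIter d n s t N ρ) ρ

/-- `ρ` is the pure stabilizer state `|ψ⟩⟨ψ|` with stabilizer label group `S ⊆ V^n`: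
`S` has order `d^n` and `ψ` is a common eigenvector of all `w(p,q)`, `(p,q) ∈ S`. -/
noncomputable def IsPureStabilizerWithGroup (d n : ℕ) [Fact (Nat.Prime d)]
    (ρ : Mat d n) (S : AddSubgroup (QV d n × QV d n)) : Prop :=
  Nat.card S = d ^ n ∧
    ∃ ψ : QV d n → ℂ, ψ ≠ 0 ∧
      ρ = Matrix.of (fun a b => ψ a * starRingEnd ℂ (ψ b)) ∧
      ∀ pq ∈ S, ∃ c : ℂ, (weyl d n pq.1 pq.2).mulVec ψ = c • ψ

/-- `ρ` is a pure stabilizer state. -/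
noncomputable def IsPureStabilizer (d n : ℕ) [Fact (Nat.Prime d)] (ρ : Mat d n) : Prop :=
  ∃ S : AddSubgroup (QV d n × QV d n), IsPureStabilizerWithGroup d n ρ S

/-- `ρ` is a stabilizer state: a convex combination of pure stabilizer states. -/
noncomputable def IsStabilizerState (d n : ℕ) [Fact (Nat.Prime d)] (ρ : Mat d n) : Prop :=
  ∃ (m : ℕ) (p : Fin m → ℝ) (τ : Fin m → Mat d n),
    (∀ i, 0 ≤ p i) ∧ ∑ i, p i = 1 ∧ (∀ i, IsPureStabilizer d n (τ i)) ∧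
    ρ = ∑ i, (p i : ℂ) • τ i

/-- `U` is a Clifford unitary: a unitary mapping each Weyl operator, under conjugation,
to a complex phase times a Weyl operator. -/
noncomputable def IsClifford (d n : ℕ) [Fact (Nat.Prime d)] (U : Mat d n) : Prop :=
  U ∈ Matrix.unitaryGroup (QV d n) ℂ ∧
    ∀ pq : QV d n × QV d n, ∃ (c : ℂ) (pq' : QV d n × QV d n),
      ‖c‖ = 1 ∧ U * weyl d n pq.1 pq.2 * Uᴴ = c • weyl d n pq'.1 pq'.2

/-- The divergence-based quantum Fisher information `J(ρ; H) = Tr[ρ [H,[H, log ρ]]]`. -/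
noncomputable def fisherJ {d n : ℕ} [Fact (Nat.Prime d)] (ρ H : Mat d n) : ℝ :=
  (ρ * (H * (H * matLog ρ - matLog ρ * H) - (H * matLog ρ - matLog ρ * H) * H)).trace.re

/-- Embed a single-qudit operator at site `k` of an `n`-qudit system
(tensored with the identity elsewhere). -/
noncomputable def embedAt (d n : ℕ) (k : Fin n) (M : Matrix (ZMod d) (ZMod d) ℂ) :
    Mat d n :=
  Matrix.of fun v w => if ∀ i, i ≠ k → v i = w i then M (v k) (w k) else 0

/-- The rank-one projection `H_j^Z = |j⟩⟨j|` onto the eigenvector of `Z`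
with eigenvalue `ξ^j`. -/
noncomputable def projZ (d : ℕ) (j : ZMod d) : Matrix (ZMod d) (ZMod d) ℂ :=
  Matrix.of fun a b => if a = j ∧ b = j then 1 else 0

/-- The rank-one projection `H_j^X` onto the eigenvector of `X` with eigenvalue `ξ^j`;
its entries are `(H_j^X)_{a b} = d⁻¹ ξ^{j(b-a)}`. -/
noncomputable def projX (d : ℕ) (j : ZMod d) : Matrix (ZMod d) (ZMod d) ℂ :=
  Matrix.of fun a b => (d : ℂ)⁻¹ * ch d (j * (b - a))

/-- Total Fisher information
`J(ρ) = ∑_{k=1}^n ∑_{j ∈ ℤ_d} J(ρ; H_j^{X_k}) + J(ρ; H_j^{Z_k})`. -/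
noncomputable def fisherTotal (d n : ℕ) [Fact (Nat.Prime d)] (ρ : Mat d n) : ℝ :=
  ∑ k : Fin n, ∑ j : ZMod d,
    (fisherJ ρ (embedAt d n k (projX d j)) + fisherJ ρ (embedAt d n k (projZ d j)))

/-- Holevo capacity of a channel `E`:
`χ(E) = sup H(∑ p_i E(ρ_i)) - ∑ p_i H(E(ρ_i))` over finite ensembles of states. -/
noncomputable def holevoCap (d n : ℕ) [Fact (Nat.Prime d)] (E : Mat d n → Mat d n) : ℝ :=
  ⨆ m : ℕ, ⨆ p : Fin m → ℝ, ⨆ ρs : Fin m → Mat d n,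
    ⨆ _ : (∀ i, 0 ≤ p i) ∧ ∑ i, p i = 1 ∧ ∀ i, IsState d n (ρs i),
      (vnEnt (∑ i, (p i : ℂ) • E (ρs i)) - ∑ i, p i * vnEnt (E (ρs i)))

/-- Hilbert–Schmidt norm `‖A‖₂ = (Tr[A†A])^{1/2}`. -/
noncomputable def hsNorm {d n : ℕ} [Fact (Nat.Prime d)] (A : Mat d n) : ℝ :=
  Real.sqrt ((Aᴴ * A).trace.re)

/-- Trace norm `‖A‖₁ = Tr[(A†A)^{1/2}]`. -/
noncomputable def trNorm {d n : ℕ} [Fact (Nat.Prime d)] (A : Mat d n) : ℝ :=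
  (matRpow (Aᴴ * A) (2⁻¹ : ℝ)).trace.re

/-- Tensor product of an `n₁`-qudit operator with an `n₂`-qudit operator,
as an `(n₁+n₂)`-qudit operator. -/
def tensorMat (d n₁ n₂ : ℕ) (ρ₁ : Mat d n₁) (ρ₂ : Mat d n₂) : Mat d (n₁ + n₂) :=
  Matrix.of fun v w =>
    ρ₁ (fun i => v (Fin.castAdd n₂ i)) (fun i => w (Fin.castAdd n₂ i)) *
    ρ₂ (fun j => v (Fin.natAdd n₁ j)) (fun j => w (Fin.natAdd n₁ j))

/-! ### Qubit (`d = 2`) specific definitions -/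

/-- The `n`-qubit Weyl (Pauli) operator `w(p,q) = ⊗_i i^{-p_i q_i} Z^{p_i} X^{q_i}`. -/
noncomputable def weyl2 (n : ℕ) (p q : Fin n → ZMod 2) :
    Matrix (Fin n → ZMod 2) (Fin n → ZMod 2) ℂ :=
  Matrix.of fun k' k =>
    if k' = k + q then
      ∏ i, ((-Complex.I) ^ ((p i).val * (q i).val) *
        (-1 : ℂ) ^ ((p i * (k i + q i)).val))
    else 0

/-- The `n`-qubit characteristic function `Ξ_ρ(p,q) = Tr[ρ w(p,q)†]`. -/
noncomputable def xi2 (n : ℕ) (ρ : Matrix (Fin n → ZMod 2) (Fin n → ZMod 2) ℂ)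
    (pq : (Fin n → ZMod 2) × (Fin n → ZMod 2)) : ℂ :=
  (ρ * (weyl2 n pq.1 pq.2)ᴴ).trace

/-- The logarithmic magic gap
`LMG(ρ) = -log₂ max{|Ξ_ρ(p,q)| : Ξ_ρ(p,q) ≠ 0, |Ξ_ρ(p,q)| ≠ 1}` (`0` if the set is
empty). -/
noncomputable def lmg (n : ℕ) (ρ : Matrix (Fin n → ZMod 2) (Fin n → ZMod 2) ℂ) : ℝ :=
  let s : Finset ℝ :=
    (Finset.univ.filter fun pq : (Fin n → ZMod 2) × (Fin n → ZMod 2) =>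
      xi2 n ρ pq ≠ 0 ∧ ‖xi2 n ρ pq‖ ≠ 1).image
      fun pq => ‖xi2 n ρ pq‖
  if h : s.Nonempty then -Real.logb 2 (s.max' h) else 0

/-- `U` is an `n`-qubit Clifford unitary. -/
noncomputable def IsClifford2 (n : ℕ) (U : Matrix (Fin n → ZMod 2) (Fin n → ZMod 2) ℂ) :
    Prop :=
  U ∈ Matrix.unitaryGroup (Fin n → ZMod 2) ℂ ∧
    ∀ pq : (Fin n → ZMod 2) × (Fin n → ZMod 2),
      ∃ (c : ℂ) (pq' : (Fin n → ZMod 2) × (Fin n → ZMod 2)),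
        ‖c‖ = 1 ∧ U * weyl2 n pq.1 pq.2 * Uᴴ = c • weyl2 n pq'.1 pq'.2

/-- The T gate `diag(1, e^{iπ/4})` acting on qubit `k` of an `n`-qubit system. -/
noncomputable def tGateAt (n : ℕ) (k : Fin n) :
    Matrix (Fin n → ZMod 2) (Fin n → ZMod 2) ℂ :=
  embedAt 2 n k (Matrix.of fun a b =>
    if a = b then (if a = 0 then 1 else Complex.exp (Real.pi * Complex.I / 4)) else 0)

/-- An `n`-qubit state: positive semidefinite with trace one. -/
def IsState2 (n : ℕ) (ρ : Matrix (Fin n → ZMod 2) (Fin n → ZMod 2) ℂ) : Prop :=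
  ρ.PosSemidef ∧ ρ.trace = 1

end PaperQI

namespace PaperQI

/-! ### Data processing for the relative entropy -/
section generic

variable {ι κ : Type*} [Fintype ι] [DecidableEq ι] [Fintype κ]

/-- Diagonal matrix with real entries. -/
noncomputable def rdiag (a : ι → ℝ) : Matrix ι ι ℂ := Matrix.diagonal fun i => (a i : ℂ)

/-- Variational functional. -/
noncomputable def Fvar (ρ τ : Matrix ι ι ℂ) (t : ℝ) (X : Matrix ι ι ℂ) : ℝ :=
  2 * (Xᴴ * ρ).trace.re - (1 - t) * (Xᴴ * X * ρ).trace.re - t * (τ * (X * Xᴴ)).trace.re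

/-- Relative entropy in spectral coordinates. -/
noncomputable def Dsp (a b : ι → ℝ) (C : Matrix ι ι ℂ) : ℝ :=
  ∑ i, ∑ j, Complex.normSq (C j i) * (a i * (Real.log (a i) - Real.log (b j)))

/-- The resolvent quantity in spectral coordinates. -/
noncomputable def Qsp (a b : ι → ℝ) (C : Matrix ι ι ℂ) (t : ℝ) : ℝ :=
  ∑ i, ∑ j, Complex.normSq (C j i) * (a i ^ 2 / ((1 - t) * a i + t * b j))

lemma rdiag_mul_apply (a : ι → ℝ) (M : Matrix ι ι ℂ) (i j : ι) :
    (rdiag a * M) i j = (a i : ℂ) * M i j := by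
  simp [rdiag, Matrix.diagonal_mul]

lemma mul_rdiag_apply (a : ι → ℝ) (M : Matrix ι ι ℂ) (i j : ι) :
    (M * rdiag a) i j = M i j * (a j : ℂ) := by
  simp [rdiag, Matrix.mul_diagonal]

lemma Fvar_spec (a b : ι → ℝ) (U V Y : Matrix ι ι ℂ) (hU : Uᴴ * U = 1) (hV : Vᴴ * V = 1)
    (t : ℝ) :
    Fvar (U * rdiag a * Uᴴ) (V * rdiag b * Vᴴ) t (V * Y * Uᴴ) =
      ∑ i, ∑ j, (2 * (starRingEnd ℂ (Y j i) * (Vᴴ * U) j i).re * a i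
        - ((1 - t) * a i + t * b j) * Complex.normSq (Y j i)) := by
  have h1 : ((V * Y * Uᴴ)ᴴ * (U * rdiag a * Uᴴ)).trace = (Yᴴ * (Vᴴ * U) * rdiag a).trace := by
    rw [show (V * Y * Uᴴ)ᴴ * (U * rdiag a * Uᴴ) = U * (Yᴴ * (Vᴴ * U) * rdiag a) * Uᴴ by
      simp [Matrix.conjTranspose_mul, Matrix.mul_assoc], Matrix.trace_mul_cycle, hU, Matrix.one_mul]
  have h2 : ((V * Y * Uᴴ)ᴴ * (V * Y * Uᴴ) * (U * rdiag a * Uᴴ)).trace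
      = (Yᴴ * Y * rdiag a).trace := by
    rw [show (V * Y * Uᴴ)ᴴ * (V * Y * Uᴴ) * (U * rdiag a * Uᴴ)
        = U * (Yᴴ * (Vᴴ * V) * Y * (Uᴴ * U) * rdiag a) * Uᴴ by
      simp [Matrix.conjTranspose_mul, Matrix.mul_assoc], Matrix.trace_mul_cycle, hU, hV]
    simp
  have h3 : ((V * rdiag b * Vᴴ) * ((V * Y * Uᴴ) * (V * Y * Uᴴ)ᴴ)).trace
      = (rdiag b * Y * Yᴴ).trace := by
    rw [show (V * rdiag b * Vᴴ) * ((V * Y * Uᴴ) * (V * Y * Uᴴ)ᴴ)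
        = V * (rdiag b * (Vᴴ * V) * Y * (Uᴴ * U) * Yᴴ) * Vᴴ by
      simp [Matrix.conjTranspose_mul, Matrix.mul_assoc], Matrix.trace_mul_cycle, hU, hV]
    simp
  have e1 : (Yᴴ * (Vᴴ * U) * rdiag a).trace.re
      = ∑ i, ∑ j, (starRingEnd ℂ (Y j i) * (Vᴴ * U) j i).re * a i := by
    generalize Vᴴ * U = C
    simp only [Matrix.trace, Matrix.diag, mul_rdiag_apply, Complex.re_sum, Complex.re_mul_ofReal]
    refine Finset.sum_congr rfl fun i _ => ?_
    rw [Matrix.mul_apply, Complex.re_sum, Finset.sum_mul]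
    rfl
  have e2 : (Yᴴ * Y * rdiag a).trace.re = ∑ i, ∑ j, a i * Complex.normSq (Y j i) := by
    simp only [Matrix.trace, Matrix.diag, mul_rdiag_apply, Complex.re_sum, Complex.re_mul_ofReal]
    refine Finset.sum_congr rfl fun i _ => ?_
    rw [Matrix.mul_apply, Complex.re_sum, Finset.sum_mul]
    refine Finset.sum_congr rfl fun j _ => ?_
    simp [Complex.normSq_apply]; ring
  have e3 : (rdiag b * Y * Yᴴ).trace.re = ∑ i, ∑ j, b j * Complex.normSq (Y j i) := by
    rw [Finset.sum_comm, Matrix.mul_assoc]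
    simp only [Matrix.trace, Matrix.diag, rdiag_mul_apply, Complex.re_sum, Complex.re_ofReal_mul]
    refine Finset.sum_congr rfl fun i _ => ?_
    rw [Matrix.mul_apply, Complex.re_sum, Finset.mul_sum]
    refine Finset.sum_congr rfl fun j _ => ?_
    simp [Complex.normSq_apply]
  rw [Fvar, h1, h2, h3, e1, e2, e3]
  simp only [Finset.mul_sum, ← Finset.sum_sub_distrib]
  refine Finset.sum_congr rfl fun i _ => Finset.sum_congr rfl fun j _ => ?_
  ring

lemma Fvar_le (a b : ι → ℝ) (ha : ∀ i, 0 < a i) (hb : ∀ i, 0 < b i) (U V X : Matrix ι ι ℂ)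
    (hU : Uᴴ * U = 1) (hV : Vᴴ * V = 1) (t : ℝ) (ht0 : 0 < t) (ht1 : t < 1) :
    Fvar (U * rdiag a * Uᴴ) (V * rdiag b * Vᴴ) t X ≤ Qsp a b (Vᴴ * U) t := by
  have hX : X = V * (Vᴴ * X * U) * Uᴴ := by
    rw [show V * (Vᴴ * X * U) * Uᴴ = (V * Vᴴ) * X * (U * Uᴴ) by simp [Matrix.mul_assoc],
      mul_eq_one_comm.mp hU, mul_eq_one_comm.mp hV]
    simp
  rw [hX, Fvar_spec a b U V _ hU hV, Qsp]
  generalize Vᴴ * X * U = Y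
  generalize Vᴴ * U = C
  refine Finset.sum_le_sum fun i _ => Finset.sum_le_sum fun j _ => ?_
  have hm : 0 < (1 - t) * a i + t * b j := by
    have := ha i; have := hb j
    have : 0 < 1 - t := by linarith
    positivity
  set m := (1 - t) * a i + t * b j
  rw [mul_div_assoc', le_div_iff₀ hm]
  simp only [Complex.normSq_apply, Complex.mul_re, Complex.conj_re, Complex.conj_im]
  nlinarith [sq_nonneg (m * (Y j i).re - a i * (C j i).re),
    sq_nonneg (m * (Y j i).im - a i * (C j i).im)]

lemma exists_Fvar_eq (a b : ι → ℝ) (ha : ∀ i, 0 < a i) (hb : ∀ i, 0 < b i) (U V : Matrix ι ι ℂ)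
    (hU : Uᴴ * U = 1) (hV : Vᴴ * V = 1) (t : ℝ) (ht0 : 0 < t) (ht1 : t < 1) :
    ∃ X, Qsp a b (Vᴴ * U) t = Fvar (U * rdiag a * Uᴴ) (V * rdiag b * Vᴴ) t X := by
  refine ⟨V * (Matrix.of fun j i =>
    ((a i / ((1 - t) * a i + t * b j) : ℝ) : ℂ) * (Vᴴ * U) j i) * Uᴴ, ?_⟩
  rw [Fvar_spec a b U V _ hU hV, Qsp]
  generalize Vᴴ * U = C
  refine Finset.sum_congr rfl fun i _ => Finset.sum_congr rfl fun j _ => ?_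
  have hm : 0 < (1 - t) * a i + t * b j := by
    have := ha i; have := hb j
    have : 0 < 1 - t := by linarith
    positivity
  simp only [Matrix.of_apply, map_mul, Complex.conj_ofReal, Complex.normSq_ofReal]
  set m := (1 - t) * a i + t * b j
  rw [mul_assoc (((a i / m : ℝ) : ℂ)), Complex.re_ofReal_mul]
  simp only [Complex.normSq_apply, Complex.mul_re, Complex.conj_re, Complex.conj_im]
  field_simp
  ring

lemma kraus_identity (K : κ → Matrix ι ι ℂ) (hK : ∑ k, (K k)ᴴ * K k = 1) (X : Matrix ι ι ℂ) :
    ∑ k, (Xᴴ * K k - K k * (∑ l, (K l)ᴴ * X * K l)ᴴ)ᴴ *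
        (Xᴴ * K k - K k * (∑ l, (K l)ᴴ * X * K l)ᴴ)
      = ∑ k, (K k)ᴴ * (X * Xᴴ) * K k
        - (∑ l, (K l)ᴴ * X * K l) * (∑ l, (K l)ᴴ * X * K l)ᴴ := by
  set Y := ∑ l, (K l)ᴴ * X * K l with hY
  have hYs : Yᴴ = ∑ l, (K l)ᴴ * Xᴴ * K l := by
    simp [hY, Matrix.conjTranspose_sum, Matrix.conjTranspose_mul, Matrix.mul_assoc]
  have h : ∀ k, (Xᴴ * K k - K k * Yᴴ)ᴴ * (Xᴴ * K k - K k * Yᴴ)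
      = (K k)ᴴ * (X * Xᴴ) * K k - ((K k)ᴴ * X * K k) * Yᴴ - Y * ((K k)ᴴ * Xᴴ * K k)
        + Y * ((K k)ᴴ * K k) * Yᴴ := by
    intro k
    simp only [Matrix.conjTranspose_sub, Matrix.conjTranspose_mul,
      Matrix.conjTranspose_conjTranspose]
    noncomm_ring
  rw [Finset.sum_congr rfl fun k _ => h k, Finset.sum_add_distrib, Finset.sum_sub_distrib,
    Finset.sum_sub_distrib, ← Finset.sum_mul, ← Finset.mul_sum, ← Finset.sum_mul, ← Finset.mul_sum,
    hK, ← hY, ← hYs]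
  simp

lemma schwarz_tr (K : κ → Matrix ι ι ℂ) (hK : ∑ k, (K k)ᴴ * K k = 1) (X τ : Matrix ι ι ℂ)
    (hτ : τ.PosSemidef) :
    (τ * ((∑ l, (K l)ᴴ * X * K l) * (∑ l, (K l)ᴴ * X * K l)ᴴ)).trace.re
      ≤ ((∑ k, K k * τ * (K k)ᴴ) * (X * Xᴴ)).trace.re := by
  have h := congrArg (fun M => (τ * M).trace.re) (kraus_identity K hK X)
  beta_reduce at h
  rw [Matrix.mul_sub τ, Matrix.trace_sub, Complex.sub_re] at h
  have hn : 0 ≤ (τ * ∑ k, (Xᴴ * K k - K k * (∑ l, (K l)ᴴ * X * K l)ᴴ)ᴴ *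
        (Xᴴ * K k - K k * (∑ l, (K l)ᴴ * X * K l)ᴴ)).trace.re := by
    rw [Finset.mul_sum, Matrix.trace_sum, Complex.re_sum]
    refine Finset.sum_nonneg fun k _ => ?_
    generalize (Xᴴ * K k - K k * (∑ l, (K l)ᴴ * X * K l)ᴴ) = Z
    rw [← Matrix.mul_assoc, Matrix.trace_mul_comm, ← Matrix.mul_assoc]
    exact (Complex.le_def.mp (hτ.mul_mul_conjTranspose_same Z).trace_nonneg).1
  have he : (τ * ∑ k, (K k)ᴴ * (X * Xᴴ) * K k).trace
      = ((∑ k, K k * τ * (K k)ᴴ) * (X * Xᴴ)).trace := by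
    rw [Finset.mul_sum, Finset.sum_mul, Matrix.trace_sum, Matrix.trace_sum]
    refine Finset.sum_congr rfl fun k _ => ?_
    rw [show τ * ((K k)ᴴ * (X * Xᴴ) * K k) = (τ * (K k)ᴴ * (X * Xᴴ)) * K k by
      simp only [Matrix.mul_assoc], Matrix.trace_mul_comm]
    simp only [Matrix.mul_assoc]
  rw [← he]
  linarith

lemma Fvar_mono (K : κ → Matrix ι ι ℂ) (hK : ∑ k, (K k)ᴴ * K k = 1) (X ρ τ : Matrix ι ι ℂ)
    (hρ : ρ.PosSemidef) (hτ : τ.PosSemidef) (t : ℝ) (ht0 : 0 < t) (ht1 : t < 1) :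
    Fvar (∑ k, K k * ρ * (K k)ᴴ) (∑ k, K k * τ * (K k)ᴴ) t X
      ≤ Fvar ρ τ t (∑ l, (K l)ᴴ * X * K l) := by
  have h2 := schwarz_tr K hK X τ hτ
  have h1 := schwarz_tr K hK Xᴴ ρ hρ
  set Y := ∑ l, (K l)ᴴ * X * K l with hY
  have hYs : ∑ l, (K l)ᴴ * Xᴴ * K l = Yᴴ := by
    simp [hY, Matrix.conjTranspose_sum, Matrix.conjTranspose_mul, Matrix.mul_assoc]
  rw [hYs, Matrix.conjTranspose_conjTranspose, Matrix.conjTranspose_conjTranspose,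
    Matrix.trace_mul_comm, Matrix.trace_mul_comm _ (Xᴴ * X)] at h1
  have h0 : (Xᴴ * ∑ k, K k * ρ * (K k)ᴴ).trace = (Yᴴ * ρ).trace := by
    rw [← hYs, Finset.mul_sum, Finset.sum_mul, Matrix.trace_sum, Matrix.trace_sum]
    refine Finset.sum_congr rfl fun k _ => ?_
    rw [show Xᴴ * (K k * ρ * (K k)ᴴ) = (Xᴴ * K k * ρ) * (K k)ᴴ by
      simp only [Matrix.mul_assoc], Matrix.trace_mul_comm]
    simp only [Matrix.mul_assoc]
  rw [Fvar, Fvar, h0]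
  have ht : 0 < 1 - t := by linarith
  nlinarith [mul_le_mul_of_nonneg_left h1 ht.le, mul_le_mul_of_nonneg_left h2 ht0.le]

lemma rdiag_conj_psd (a : ι → ℝ) (ha : ∀ i, 0 < a i) (U : Matrix ι ι ℂ) :
    (U * rdiag a * Uᴴ).PosSemidef := by
  refine Matrix.PosSemidef.mul_mul_conjTranspose_same ?_ U
  refine Matrix.PosSemidef.diagonal fun i => ?_
  simpa using (ha i).le

lemma normSq_col_sum (C : Matrix ι ι ℂ) (hC : Cᴴ * C = 1) (i : ι) :
    ∑ j, Complex.normSq (C j i) = 1 := by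
  have h := congrArg (fun M : Matrix ι ι ℂ => (M i i).re) hC
  simp only [Matrix.mul_apply, Matrix.one_apply_eq, Complex.re_sum, Complex.one_re] at h
  rw [← h]
  refine Finset.sum_congr rfl fun j _ => ?_
  simp [Complex.normSq_apply]

lemma normSq_row_sum (C : Matrix ι ι ℂ) (hC : C * Cᴴ = 1) (i : ι) :
    ∑ j, Complex.normSq (C i j) = 1 := by
  have h := congrArg (fun M : Matrix ι ι ℂ => (M i i).re) hC
  simp only [Matrix.mul_apply, Matrix.one_apply_eq, Complex.re_sum, Complex.one_re] at h
  rw [← h]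
  refine Finset.sum_congr rfl fun j _ => ?_
  simp [Complex.normSq_apply]

/-- Integral representation of the spectral relative entropy. -/
lemma log_integral (a b : ℝ) (ha : 0 < a) (hb : 0 < b) :
    IntervalIntegrable (fun t : ℝ => (a - b) / ((1 - t) * a + t * b)) MeasureTheory.volume 0 1 ∧
    ∫ t in (0:ℝ)..1, (a - b) / ((1 - t) * a + t * b) = Real.log a - Real.log b := by
  have hm : ∀ t ∈ Set.uIcc (0:ℝ) 1, 0 < (1 - t) * a + t * b := by
    intro t ht
    rw [Set.uIcc_of_le zero_le_one] at ht
    rcases eq_or_lt_of_le ht.1 with h | h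
    · subst h; simpa using ha
    · have := mul_pos h hb
      have := mul_nonneg (sub_nonneg.mpr ht.2) ha.le
      linarith
  have hi : IntervalIntegrable (fun t : ℝ => (a - b) / ((1 - t) * a + t * b))
      MeasureTheory.volume 0 1 := by
    apply ContinuousOn.intervalIntegrable
    refine ContinuousOn.div (by fun_prop) (by fun_prop) fun t ht => (hm t ht).ne'
  refine ⟨hi, ?_⟩
  have := intervalIntegral.integral_eq_sub_of_hasDerivAt
    (f := fun t : ℝ => - Real.log ((1 - t) * a + t * b))
    (f' := fun t : ℝ => (a - b) / ((1 - t) * a + t * b)) (a := 0) (b := 1) ?_ hi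
  · rw [this]; simp; ring
  · intro t ht
    have h1 : HasDerivAt (fun t : ℝ => (1 - t) * a + t * b) (b - a) t := by
      have h := (((hasDerivAt_id t).const_sub 1).mul_const a).add ((hasDerivAt_id t).mul_const b)
      exact h.congr_deriv (by ring)
    have h2 := (h1.log (hm t ht).ne').neg
    exact h2.congr_deriv (by ring)

/-- The integrand in the representation of `Dsp`. -/
noncomputable def Isp (a b : ι → ℝ) (C : Matrix ι ι ℂ) (t : ℝ) : ℝ :=
  ∑ i, ∑ j, Complex.normSq (C j i) * (a i * ((a i - b j) / ((1 - t) * a i + t * b j)))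

lemma Dsp_integral (a b : ι → ℝ) (ha : ∀ i, 0 < a i) (hb : ∀ i, 0 < b i) (C : Matrix ι ι ℂ) :
    IntervalIntegrable (Isp a b C) MeasureTheory.volume 0 1 ∧
    ∫ t in (0:ℝ)..1, Isp a b C t = Dsp a b C := by
  have h : ∀ i j, IntervalIntegrable (fun t : ℝ => Complex.normSq (C j i) *
      (a i * ((a i - b j) / ((1 - t) * a i + t * b j)))) MeasureTheory.volume 0 1 := fun i j =>
    ((log_integral (a i) (b j) (ha i) (hb j)).1.const_mul _).const_mul _
  have h' : ∀ i, IntervalIntegrable (fun t : ℝ => ∑ j, Complex.normSq (C j i) *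
      (a i * ((a i - b j) / ((1 - t) * a i + t * b j)))) MeasureTheory.volume 0 1 := fun i => by
    have := IntervalIntegrable.sum (μ := MeasureTheory.volume) (a := 0) (b := 1) Finset.univ
      (fun j _ => h i j)
    rw [Finset.sum_fn] at this
    exact this
  constructor
  · have := IntervalIntegrable.sum (μ := MeasureTheory.volume) (a := 0) (b := 1) Finset.univ
      (fun i _ => h' i)
    rw [Finset.sum_fn] at this
    exact this
  · unfold Isp Dsp
    rw [intervalIntegral.integral_finsetSum fun i _ => h' i]
    refine Finset.sum_congr rfl fun i _ => ?_
    rw [intervalIntegral.integral_finsetSum fun j _ => h i j]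
    refine Finset.sum_congr rfl fun j _ => ?_
    rw [intervalIntegral.integral_const_mul, intervalIntegral.integral_const_mul,
      (log_integral (a i) (b j) (ha i) (hb j)).2]

lemma Isp_eq (a b : ι → ℝ) (ha : ∀ i, 0 < a i) (hb : ∀ i, 0 < b i) (C : Matrix ι ι ℂ)
    (hC : Cᴴ * C = 1) (t : ℝ) (ht0 : 0 < t) (ht1 : t < 1) :
    Isp a b C t = (Qsp a b C t - ∑ i, a i) / t := by
  have h : ∑ i, a i = ∑ i, ∑ j, Complex.normSq (C j i) * a i := by
    refine Finset.sum_congr rfl fun i _ => ?_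
    rw [← Finset.sum_mul, normSq_col_sum C hC, one_mul]
  rw [h, Isp, Qsp]
  simp only [← Finset.sum_sub_distrib, Finset.sum_div]
  refine Finset.sum_congr rfl fun i _ => Finset.sum_congr rfl fun j _ => ?_
  have hm : 0 < (1 - t) * a i + t * b j := by
    have := ha i; have := hb j
    have : 0 < 1 - t := by linarith
    positivity
  have hm' := hm.ne'
  generalize hmm : (1 - t) * a i + t * b j = m at hm hm'
  rw [eq_div_iff ht0.ne']
  field_simp
  rw [← hmm]
  ring

lemma trace_rdiag_conj (a : ι → ℝ) (U : Matrix ι ι ℂ) (hU : Uᴴ * U = 1) :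
    (U * rdiag a * Uᴴ).trace.re = ∑ i, a i := by
  rw [Matrix.trace_mul_cycle, hU, Matrix.one_mul]
  simp [rdiag]

lemma dpi (K : κ → Matrix ι ι ℂ) (hK : ∑ k, (K k)ᴴ * K k = 1)
    (a b a' b' : ι → ℝ) (ha : ∀ i, 0 < a i) (hb : ∀ i, 0 < b i)
    (ha' : ∀ i, 0 < a' i) (hb' : ∀ i, 0 < b' i) (U V U' V' : Matrix ι ι ℂ)
    (hU : Uᴴ * U = 1) (hV : Vᴴ * V = 1) (hU' : U'ᴴ * U' = 1) (hV' : V'ᴴ * V' = 1)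
    (h1 : ∑ k, K k * (U * rdiag a * Uᴴ) * (K k)ᴴ = U' * rdiag a' * U'ᴴ)
    (h2 : ∑ k, K k * (V * rdiag b * Vᴴ) * (K k)ᴴ = V' * rdiag b' * V'ᴴ) :
    Dsp a' b' (V'ᴴ * U') ≤ Dsp a b (Vᴴ * U) := by
  have uni : ∀ A B : Matrix ι ι ℂ, Aᴴ * A = 1 → Bᴴ * B = 1 → (Bᴴ * A)ᴴ * (Bᴴ * A) = 1 := by
    intro A B hA hB
    rw [Matrix.conjTranspose_mul, Matrix.conjTranspose_conjTranspose,
      show Aᴴ * B * (Bᴴ * A) = Aᴴ * (B * Bᴴ) * A by simp [Matrix.mul_assoc],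
      mul_eq_one_comm.mp hB, Matrix.mul_one, hA]
  have htr : ∑ i, a' i = ∑ i, a i := by
    rw [← trace_rdiag_conj a' U' hU', ← trace_rdiag_conj a U hU, ← h1, Matrix.trace_sum]
    rw [Finset.sum_congr rfl fun k _ => Matrix.trace_mul_cycle (K k) _ _, ← Matrix.trace_sum,
      ← Finset.sum_mul, hK, Matrix.one_mul]
  rw [← (Dsp_integral a b ha hb _).2, ← (Dsp_integral a' b' ha' hb' _).2]
  refine intervalIntegral.integral_mono_on_of_le_Ioo zero_le_one (Dsp_integral a' b' ha' hb' _).1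
    (Dsp_integral a b ha hb _).1 fun t ht => ?_
  rw [Isp_eq a b ha hb _ (uni U V hU hV) t ht.1 ht.2,
    Isp_eq a' b' ha' hb' _ (uni U' V' hU' hV') t ht.1 ht.2, htr]
  refine div_le_div_of_nonneg_right (sub_le_sub_right ?_ _) ht.1.le
  obtain ⟨X, hX⟩ := exists_Fvar_eq a' b' ha' hb' U' V' hU' hV' t ht.1 ht.2
  rw [hX, ← h1, ← h2]
  exact (Fvar_mono K hK X _ _ (rdiag_conj_psd a ha U) (rdiag_conj_psd b hb V) t ht.1 ht.2).trans
    (Fvar_le a b ha hb U V _ hU hV t ht.1 ht.2)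

lemma Dsp_eq (a b : ι → ℝ) (U V : Matrix ι ι ℂ) (hU : Uᴴ * U = 1) (hV : Vᴴ * V = 1) :
    ((U * rdiag a * Uᴴ) * (U * rdiag (fun i => Real.log (a i)) * Uᴴ
      - V * rdiag (fun i => Real.log (b i)) * Vᴴ)).trace.re = Dsp a b (Vᴴ * U) := by
  set C := Vᴴ * U with hCd
  have hC : Cᴴ * C = 1 := by
    rw [hCd, Matrix.conjTranspose_mul, Matrix.conjTranspose_conjTranspose,
      show Uᴴ * V * (Vᴴ * U) = Uᴴ * (V * Vᴴ) * U by simp [Matrix.mul_assoc],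
      mul_eq_one_comm.mp hV, Matrix.mul_one, hU]
  rw [Matrix.mul_sub, Matrix.trace_sub, Complex.sub_re]
  have h1 : ((U * rdiag a * Uᴴ) * (U * rdiag (fun i => Real.log (a i)) * Uᴴ)).trace.re
      = ∑ i, ∑ j, Complex.normSq (C j i) * (a i * Real.log (a i)) := by
    rw [show (U * rdiag a * Uᴴ) * (U * rdiag (fun i => Real.log (a i)) * Uᴴ)
      = U * (rdiag a * (Uᴴ * U) * rdiag (fun i => Real.log (a i))) * Uᴴ by
        simp only [Matrix.mul_assoc], Matrix.trace_mul_cycle, hU]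
    simp only [← Finset.sum_mul, normSq_col_sum C hC, Matrix.mul_one, one_mul]
    simp only [rdiag, Matrix.diagonal_mul_diagonal, Matrix.trace_diagonal, Complex.re_sum,
      ← Complex.ofReal_mul, Complex.ofReal_re]
  have h2 : ((U * rdiag a * Uᴴ) * (V * rdiag (fun i => Real.log (b i)) * Vᴴ)).trace.re
      = ∑ i, ∑ j, Complex.normSq (C j i) * (a i * Real.log (b j)) := by
    rw [show (U * rdiag a * Uᴴ) * (V * rdiag (fun i => Real.log (b i)) * Vᴴ)
      = U * (rdiag a * Cᴴ * rdiag (fun i => Real.log (b i))) * Vᴴ by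
        simp only [hCd, Matrix.mul_assoc, Matrix.conjTranspose_mul,
          Matrix.conjTranspose_conjTranspose],
      Matrix.trace_mul_cycle, ← hCd, Matrix.trace_mul_comm, Matrix.mul_assoc, Matrix.mul_assoc]
    simp only [Matrix.trace, Matrix.diag, rdiag_mul_apply, Complex.re_sum, Complex.re_ofReal_mul]
    refine Finset.sum_congr rfl fun i _ => ?_
    rw [Matrix.mul_apply, Complex.re_sum, Finset.mul_sum]
    refine Finset.sum_congr rfl fun j _ => ?_
    rw [rdiag_mul_apply]
    simp [Complex.normSq_apply]
    ring
  rw [h1, h2, Dsp]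
  simp only [← Finset.sum_sub_distrib]
  refine Finset.sum_congr rfl fun i _ => Finset.sum_congr rfl fun j _ => ?_
  ring

end generic

/-! ### The relative entropy of a state to its unitary conjugate -/
section concrete

variable {d n : ℕ} [Fact (Nat.Prime d)]

/-- `D(ρ ‖ W ρ W†)`. -/
noncomputable def relW (ρ W : Mat d n) : ℝ :=
  (ρ * (matLog ρ - W * matLog ρ * Wᴴ)).trace.re

lemma relW_eq (ρ W : Mat d n) (h : ρ.IsHermitian) (hW : Wᴴ * W = 1) :
    ∃ U : Mat d n, Uᴴ * U = 1 ∧ ρ = U * rdiag h.eigenvalues * Uᴴ ∧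
      relW ρ W = Dsp h.eigenvalues h.eigenvalues ((W * U)ᴴ * U) := by
  have hU : (h.eigenvectorUnitary : Mat d n)ᴴ * (h.eigenvectorUnitary : Mat d n) = 1 :=
    Matrix.mem_unitaryGroup_iff'.mp h.eigenvectorUnitary.2
  have hρ : ρ = (h.eigenvectorUnitary : Mat d n) * rdiag h.eigenvalues *
      (h.eigenvectorUnitary : Mat d n)ᴴ := h.spectral_theorem
  have hL : matLog ρ = (h.eigenvectorUnitary : Mat d n) *
      rdiag (fun i => Real.log (h.eigenvalues i)) * (h.eigenvectorUnitary : Mat d n)ᴴ := by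
    rw [matLog, dif_pos h]; rfl
  refine ⟨h.eigenvectorUnitary, hU, hρ, ?_⟩
  rw [relW, hL]
  generalize (h.eigenvectorUnitary : Mat d n) = U at *
  generalize h.eigenvalues = a at *
  have hWU : (W * U)ᴴ * (W * U) = 1 := by
    rw [Matrix.conjTranspose_mul, show Uᴴ * Wᴴ * (W * U) = Uᴴ * (Wᴴ * W) * U by
      simp only [Matrix.mul_assoc], hW, Matrix.mul_one, hU]
  rw [← Dsp_eq a a U (W * U) hU hWU, ← hρ]
  simp only [Matrix.conjTranspose_mul, Matrix.mul_assoc]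

lemma relW_mono {κ : Type*} [Fintype κ] (K : κ → Mat d n) (hK : ∑ k, (K k)ᴴ * K k = 1)
    (ρ ρ' W W' : Mat d n) (hρ : ρ.PosDef) (hρ' : ρ'.PosDef)
    (hW : Wᴴ * W = 1) (hW' : W'ᴴ * W' = 1)
    (h1 : ∑ k, K k * ρ * (K k)ᴴ = ρ')
    (h2 : ∑ k, K k * (W * ρ * Wᴴ) * (K k)ᴴ = W' * ρ' * W'ᴴ) :
    relW ρ' W' ≤ relW ρ W := by
  obtain ⟨U, hU, hUρ, e⟩ := relW_eq ρ W hρ.1 hW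
  obtain ⟨U', hU', hUρ', e'⟩ := relW_eq ρ' W' hρ'.1 hW'
  rw [e, e']
  have uni : ∀ A B : Mat d n, Aᴴ * A = 1 → Bᴴ * B = 1 → (A * B)ᴴ * (A * B) = 1 := by
    intro A B hA hB
    rw [Matrix.conjTranspose_mul, show Bᴴ * Aᴴ * (A * B) = Bᴴ * (Aᴴ * A) * B by
      simp only [Matrix.mul_assoc], hA, Matrix.mul_one, hB]
  have c1 : W * ρ * Wᴴ = (W * U) * rdiag hρ.1.eigenvalues * (W * U)ᴴ := by
    conv_lhs => rw [hUρ]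
    simp only [Matrix.conjTranspose_mul, Matrix.mul_assoc]
  have c2 : W' * ρ' * W'ᴴ = (W' * U') * rdiag hρ'.1.eigenvalues * (W' * U')ᴴ := by
    conv_lhs => rw [hUρ']
    simp only [Matrix.conjTranspose_mul, Matrix.mul_assoc]
  refine dpi K hK _ _ _ _ hρ.eigenvalues_pos hρ.eigenvalues_pos hρ'.eigenvalues_pos
    hρ'.eigenvalues_pos U (W * U) U' (W' * U') hU (uni _ _ hW hU) hU' (uni _ _ hW' hU') ?_ ?_
  · rw [← hUρ, ← hUρ']; exact h1
  · rw [← c1, ← c2]; exact h2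

lemma ch_eq (z : ZMod d) : ch d z = ZMod.stdAddChar z := by
  rw [ZMod.stdAddChar_apply, ZMod.toCircle_apply, ch]

lemma ch_add (x y : ZMod d) : ch d (x + y) = ch d x * ch d y := by
  simp only [ch_eq, AddChar.map_add_eq_mul]

lemma ch_zero : ch d 0 = 1 := by simp [ch_eq]

lemma ch_conj (x : ZMod d) : starRingEnd ℂ (ch d x) = ch d (-x) := by
  simp only [ch_eq, AddChar.map_neg_eq_conj]

lemma sum_ch (x : ZMod d) : ∑ j, ch d (j * x) = if x = 0 then (d : ℂ) else 0 := by
  simp only [ch_eq]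
  rw [AddChar.sum_mulShift x (ZMod.isPrimitive_stdAddChar d), ZMod.card]
  split_ifs <;> simp

lemma twirl (W H : ZMod d → Mat d n) (hadj : ∀ s, (W s)ᴴ = W (-s))
    (hH : ∀ j, H j = (d : ℂ)⁻¹ • ∑ s, ch d (j * s) • W s) (L : Mat d n) :
    ∑ j, H j * L * H j = (d : ℂ)⁻¹ • ∑ s, W s * L * (W s)ᴴ := by
  have hd0 : (d : ℂ) ≠ 0 := Nat.cast_ne_zero.mpr (Fact.out : Nat.Prime d).ne_zero
  have h : ∀ j, H j * L * H j
      = ((d : ℂ)⁻¹ * (d : ℂ)⁻¹) • ∑ s, ∑ t, ch d (j * (s + t)) • (W s * L * W t) := by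
    intro j
    rw [hH, Matrix.smul_mul, Matrix.smul_mul, Matrix.mul_smul, smul_smul, Finset.sum_mul,
      Finset.sum_mul_sum]
    congr 1
    refine Finset.sum_congr rfl fun s _ => Finset.sum_congr rfl fun t _ => ?_
    rw [mul_add, ch_add, Matrix.smul_mul, Matrix.smul_mul, Matrix.mul_smul, smul_smul]
  rw [Finset.sum_congr rfl fun j _ => h j, ← Finset.smul_sum, Finset.sum_comm, mul_smul]
  congr 1
  rw [Finset.smul_sum]
  refine Finset.sum_congr rfl fun s _ => ?_
  rw [Finset.sum_comm]
  simp only [← Finset.sum_smul, sum_ch]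
  rw [Finset.sum_eq_single (-s)]
  · rw [hadj]; simp [smul_smul, hd0]
  · intro t _ ht
    rw [if_neg, zero_smul]
    intro h0
    exact ht (eq_neg_of_add_eq_zero_right h0)
  · simp

lemma fisher_sum (W H : ZMod d → Mat d n) (hadj : ∀ s, (W s)ᴴ = W (-s))
    (huni : ∀ s, (W s)ᴴ * W s = 1)
    (hH : ∀ j, H j = (d : ℂ)⁻¹ • ∑ s, ch d (j * s) • W s) (ρ : Mat d n) :
    ∑ j, fisherJ ρ (H j) = 2 * (d : ℝ)⁻¹ * ∑ s, relW ρ (W s) := by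
  have hd0 : (d : ℂ) ≠ 0 := Nat.cast_ne_zero.mpr (Fact.out : Nat.Prime d).ne_zero
  simp only [fisherJ, relW]
  rw [← Complex.re_sum, ← Complex.re_sum, ← Matrix.trace_sum, ← Matrix.trace_sum,
    ← Finset.mul_sum, ← Finset.mul_sum]
  set L := matLog ρ
  have hone : ∑ j, H j * H j = 1 := by
    have := twirl W H hadj hH 1
    simp only [Matrix.mul_one] at this
    rw [this, Finset.sum_congr rfl fun s _ => mul_eq_one_comm.mp (huni s)]
    simp [← Nat.cast_smul_eq_nsmul ℂ, smul_smul, ZMod.card, hd0]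
  have key : ∑ j, (H j * (H j * L - L * H j) - (H j * L - L * H j) * H j)
      = ((2 * (d : ℝ)⁻¹ : ℝ) : ℂ) • ∑ s, (L - W s * L * (W s)ᴴ) := by
    have e : ∀ j, H j * (H j * L - L * H j) - (H j * L - L * H j) * H j
        = H j * H j * L + L * (H j * H j) - (2 : ℂ) • (H j * L * H j) := by
      intro j
      rw [two_smul]
      noncomm_ring
    rw [Finset.sum_congr rfl fun j _ => e j, Finset.sum_sub_distrib, Finset.sum_add_distrib,
      ← Finset.sum_mul, ← Finset.mul_sum, ← Finset.smul_sum, hone, twirl W H hadj hH,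
      Finset.sum_sub_distrib]
    simp only [Finset.sum_const, Finset.card_univ, ZMod.card, Matrix.one_mul, Matrix.mul_one,
      smul_sub, smul_smul, ← Nat.cast_smul_eq_nsmul ℂ]
    push_cast
    rw [mul_assoc, inv_mul_cancel₀ hd0, mul_one, two_smul]
  rw [key, Matrix.mul_smul, Matrix.trace_smul, smul_eq_mul, Complex.re_ofReal_mul]

/-- Shift unitary at site `k`. -/
noncomputable def Wx (k : Fin n) (s : ZMod d) : Mat d n :=
  Matrix.of fun v w => if w = v + Pi.single k s then 1 else 0

/-- Phase unitary at site `k`. -/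
noncomputable def Wz (k : Fin n) (s : ZMod d) : Mat d n :=
  Matrix.diagonal fun v => ch d (-(s * v k))

lemma Wx_conj (k : Fin n) (s : ZMod d) (L : Mat d n) (v w : QV d n) :
    (Wx k s * L * (Wx k s)ᴴ) v w = L (v + Pi.single k s) (w + Pi.single k s) := by
  simp [Matrix.mul_apply, Wx, apply_ite]

lemma Wz_conj (k : Fin n) (s : ZMod d) (L : Mat d n) (v w : QV d n) :
    (Wz k s * L * (Wz k s)ᴴ) v w = ch d (-(s * v k)) * L v w * ch d (s * w k) := by
  rw [Wz, Matrix.diagonal_conjTranspose, Matrix.mul_diagonal, Matrix.diagonal_mul]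
  congr 1
  simpa using ch_conj (d := d) (-(s * w k))

lemma Wx_adj (k : Fin n) (s : ZMod d) : (Wx k s : Mat d n)ᴴ = Wx k (-s) := by
  ext v w
  simp only [Wx, Matrix.conjTranspose_apply, Matrix.of_apply, Pi.single_neg]
  have : v = w + Pi.single k s ↔ w = v + -Pi.single k s := by
    rw [← sub_eq_add_neg, eq_sub_iff_add_eq, eq_comm]
  simp [this, apply_ite]

lemma Wz_adj (k : Fin n) (s : ZMod d) : (Wz k s : Mat d n)ᴴ = Wz k (-s) := by
  rw [Wz, Wz, Matrix.diagonal_conjTranspose]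
  congr 1
  ext v
  have := ch_conj (d := d) (-(s * v k))
  rw [neg_mul]
  simpa using this

lemma Wx_uni (k : Fin n) (s : ZMod d) : (Wx k s : Mat d n)ᴴ * Wx k s = 1 := by
  apply mul_eq_one_comm.mp
  ext v w
  have := Wx_conj k s (1 : Mat d n) v w
  rw [Matrix.mul_one] at this
  rw [this]
  simp [Matrix.one_apply]

lemma Wz_uni (k : Fin n) (s : ZMod d) : (Wz k s : Mat d n)ᴴ * Wz k s = 1 := by
  rw [Wz_adj, Wz, Wz, Matrix.diagonal_mul_diagonal, ← Matrix.diagonal_one]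
  congr 1
  ext v
  rw [← ch_add, neg_mul]
  simp [ch_zero]

lemma Hx_eq (k : Fin n) (j : ZMod d) :
    embedAt d n k (projX d j) = (d : ℂ)⁻¹ • ∑ s, ch d (j * s) • (Wx k s : Mat d n) := by
  ext v w
  simp only [embedAt, projX, Matrix.of_apply, Matrix.smul_apply, Matrix.sum_apply, Wx,
    smul_eq_mul, mul_ite, mul_one, mul_zero]
  have hiff : ∀ s, w = v + Pi.single k s ↔ (∀ i, i ≠ k → v i = w i) ∧ s = w k - v k := by
    intro s
    constructor
    · rintro rfl
      refine ⟨fun i hi => by simp [hi], by simp⟩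
    · rintro ⟨h, rfl⟩
      ext i
      by_cases hi : i = k
      · subst hi; simp
      · simp [hi, h i hi]
  simp only [hiff]
  by_cases h : ∀ i, i ≠ k → v i = w i
  · rw [if_pos h]
    simp_rw [and_iff_right h]
    simp
  · rw [if_neg h, Finset.sum_eq_zero fun s _ => if_neg fun hh => h hh.1, mul_zero]

lemma Hz_eq (k : Fin n) (j : ZMod d) :
    embedAt d n k (projZ d j) = (d : ℂ)⁻¹ • ∑ s, ch d (j * s) • (Wz k s : Mat d n) := by
  have hd0 : (d : ℂ) ≠ 0 := Nat.cast_ne_zero.mpr (Fact.out : Nat.Prime d).ne_zero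
  ext v w
  simp only [embedAt, projZ, Matrix.of_apply, Matrix.smul_apply, Matrix.sum_apply, Wz,
    smul_eq_mul]
  by_cases hvw : v = w
  · subst hvw
    simp only [Matrix.diagonal_apply_eq, ← ch_add]
    have e : ∀ s, j * s + -(s * v k) = s * (j - v k) := fun s => by ring
    simp only [e, sum_ch, sub_eq_zero]
    by_cases h : j = v k
    · simp [h, hd0]
    · simp [h, Ne.symm h]
  · simp only [Matrix.diagonal_apply_ne _ hvw, mul_zero, Finset.sum_const_zero]
    split_ifs with h1 h2
    · exfalso
      apply hvw
      ext i
      by_cases hi : i = k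
      · subst hi; rw [h2.1, h2.2]
      · exact h1 i hi
    · rfl
    · rfl

lemma fisherTotal_eq (ρ : Mat d n) :
    fisherTotal d n ρ =
      ∑ k : Fin n, (2 * (d : ℝ)⁻¹ * ∑ s, relW ρ (Wx k s) + 2 * (d : ℝ)⁻¹ * ∑ s, relW ρ (Wz k s)) := by
  refine Finset.sum_congr rfl fun k _ => ?_
  rw [Finset.sum_add_distrib,
    fisher_sum (Wx k) (fun j => embedAt d n k (projX d j)) (Wx_adj k) (Wx_uni k) (Hx_eq k),
    fisher_sum (Wz k) (fun j => embedAt d n k (projZ d j)) (Wz_adj k) (Wz_uni k) (Hz_eq k)]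

/-! ### The convolution as a channel -/

/-- Explicit formula for the convolution. -/
noncomputable def cv (a b c e : ZMod d) (ρ σ : Mat d n) : Mat d n :=
  Matrix.of fun k k' => ∑ l : QV d n,
    ρ (a • k + b • l) (a • k' + b • l) * σ (c • k + e • l) (c • k' + e • l)

lemma conv_eq_cv (g00 g01 g10 g11 : ZMod d) (hdet : g00 * g11 - g01 * g10 ≠ 0) (ρ σ : Mat d n) :
    conv d n g00 g01 g10 g11 ρ σ = cv g00 g10 g01 g11 ρ σ := by
  have hiff : ∀ kl ij : QV d n × QV d n,
      (kl = ((fun a => (g00 * g11 - g01 * g10)⁻¹ * g11 * ij.1 a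
                      - (g00 * g11 - g01 * g10)⁻¹ * g10 * ij.2 a : QV d n),
             (fun a => -((g00 * g11 - g01 * g10)⁻¹ * g01) * ij.1 a
                      + (g00 * g11 - g01 * g10)⁻¹ * g00 * ij.2 a : QV d n))) ↔
      ij = (g00 • kl.1 + g10 • kl.2, g01 • kl.1 + g11 • kl.2) := by
    intro kl ij
    constructor
    · rintro rfl
      ext i
      · simp only [Pi.add_apply, Pi.smul_apply, smul_eq_mul]
        field_simp
        ring
      · simp only [Pi.add_apply, Pi.smul_apply, smul_eq_mul]
        field_simp
        ring
    · rintro rfl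
      ext i
      · simp only [Pi.add_apply, Pi.smul_apply, smul_eq_mul]
        field_simp
        ring
      · simp only [Pi.add_apply, Pi.smul_apply, smul_eq_mul]
        field_simp
        ring
  have hU : convU d n g00 g01 g10 g11 = Matrix.of fun kl ij =>
      if ij = (g00 • kl.1 + g10 • kl.2, g01 • kl.1 + g11 • kl.2) then 1 else 0 := by
    ext kl ij
    simp only [convU, Matrix.of_apply, hiff]
  ext k k'
  simp only [conv, ptrB, cv, Matrix.of_apply]
  refine Finset.sum_congr rfl fun l _ => ?_
  rw [hU, Matrix.mul_apply, Finset.sum_eq_single (g00 • k' + g10 • l, g01 • k' + g11 • l)]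
  · rw [Matrix.mul_apply, Finset.sum_eq_single (g00 • k + g10 • l, g01 • k + g11 • l)]
    · simp [kron]
    · intro x _ hx
      simp [hx]
    · simp
  · intro x _ hx
    simp [hx]
  · simp

lemma cv_swap (a b c e : ZMod d) (ρ σ : Mat d n) : cv a b c e ρ σ = cv c e a b σ ρ := by
  ext k k'
  simp only [cv, Matrix.of_apply]
  exact Finset.sum_congr rfl fun l _ => mul_comm _ _

lemma cv_posDef (a b c e : ZMod d) (ha : a ≠ 0) (hc : c ≠ 0) (ρ σ : Mat d n)
    (hρ : ρ.PosDef) (hσ : σ.PosDef) : (cv a b c e ρ σ).PosDef := by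
  have h : cv a b c e ρ σ = ∑ l : QV d n,
      (ρ.submatrix (fun k => a • k + b • l) (fun k => a • k + b • l)) ⊙
      (σ.submatrix (fun k => c • k + e • l) (fun k => c • k + e • l)) := by
    ext k k'
    simp [cv, Matrix.sum_apply]
  have inj : ∀ (x y : ZMod d) (_ : x ≠ 0) (l : QV d n),
      Function.Injective fun k : QV d n => x • k + y • l := by
    intro x y hx l k k' hk
    exact smul_right_injective _ hx (add_right_cancel hk)
  rw [h]
  refine Matrix.posDef_sum Finset.univ_nonempty fun l _ => ?_
  exact (hρ.submatrix (inj a b ha l)).hadamard (hσ.submatrix (inj c e hc l))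

lemma cv_kraus (a b c e : ZMod d) (hdet : a * e - b * c ≠ 0) (σ : Mat d n) (hσ : IsState d n σ) :
    ∃ K : QV d n × QV d n → Mat d n, (∑ x, (K x)ᴴ * K x = 1) ∧
      ∀ ρ, ∑ x, K x * ρ * (K x)ᴴ = cv a b c e ρ σ := by
  obtain ⟨B, hB⟩ : ∃ B : Mat d n, σ = Bᴴ * B := by
    open scoped MatrixOrder Matrix.Norms.L2Operator in
    exact CStarAlgebra.nonneg_iff_eq_star_mul_self.mp hσ.1.nonneg
  refine ⟨fun x => Matrix.of fun k i =>
    if i = a • k + b • x.1 then starRingEnd ℂ (B x.2 (c • k + e • x.1)) else 0, ?_, ?_⟩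
  · have hS : ∀ i : QV d n, ∑ l : QV d n, ∑ k : QV d n,
        (if i = a • k + b • l then σ (c • k + e • l) (c • k + e • l) else 0) = 1 := by
      intro i
      let Φ : QV d n × QV d n ≃ QV d n × QV d n :=
        { toFun := fun p => (a • p.2 + b • p.1, c • p.2 + e • p.1)
          invFun := fun q => ((a * e - b * c)⁻¹ • (a • q.2 - c • q.1),
            (a * e - b * c)⁻¹ • (e • q.1 - b • q.2))
          left_inv := by
            intro p
            ext i
            · simp only [Pi.add_apply, Pi.sub_apply, Pi.smul_apply, smul_eq_mul]
              rw [inv_mul_eq_iff_eq_mul₀ hdet]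
              ring
            · simp only [Pi.add_apply, Pi.sub_apply, Pi.smul_apply, smul_eq_mul]
              rw [inv_mul_eq_iff_eq_mul₀ hdet]
              ring
          right_inv := by
            intro p
            ext i
            · simp only [Pi.add_apply, Pi.sub_apply, Pi.smul_apply, smul_eq_mul]
              linear_combination p.1 i * mul_inv_cancel₀ hdet
            · simp only [Pi.add_apply, Pi.sub_apply, Pi.smul_apply, smul_eq_mul]
              linear_combination p.2 i * mul_inv_cancel₀ hdet }
      have := Equiv.sum_comp Φ fun q => if i = q.1 then σ q.2 q.2 else 0
      rw [Fintype.sum_prod_type, Fintype.sum_prod_type] at this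
      refine this.trans ?_
      rw [Finset.sum_comm]
      simp only [Finset.sum_ite_eq, Finset.mem_univ, if_true]
      exact hσ.2
    ext i i'
    rw [Matrix.sum_apply, Fintype.sum_prod_type]
    by_cases hi : i = i'
    · subst hi
      rw [Matrix.one_apply_eq, ← hS i]
      refine Finset.sum_congr rfl fun l _ => ?_
      simp only [Matrix.mul_apply]
      rw [Finset.sum_comm]
      refine Finset.sum_congr rfl fun k _ => ?_
      by_cases h : i = a • k + b • l
      · rw [if_pos h, hB, Matrix.mul_apply]
        refine Finset.sum_congr rfl fun m _ => ?_
        simp only [Matrix.conjTranspose_apply, Matrix.of_apply, if_pos h]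
        simp [mul_comm]
      · rw [if_neg h]
        refine Finset.sum_eq_zero fun m _ => ?_
        simp only [Matrix.conjTranspose_apply, Matrix.of_apply, if_neg h, mul_zero]
    · rw [Matrix.one_apply_ne hi]
      refine Finset.sum_eq_zero fun l _ => Finset.sum_eq_zero fun m _ => ?_
      rw [Matrix.mul_apply]
      refine Finset.sum_eq_zero fun k _ => ?_
      simp only [Matrix.conjTranspose_apply, Matrix.of_apply]
      by_cases h : i = a • k + b • l
      · have h2 : ¬ i' = a • k + b • l := fun h2 => hi (h.trans h2.symm)
        rw [if_neg h2, mul_zero]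
      · rw [if_neg h, star_zero, zero_mul]
  · intro ρ
    ext k k'
    rw [Matrix.sum_apply, Fintype.sum_prod_type]
    simp only [cv, Matrix.of_apply]
    refine Finset.sum_congr rfl fun l _ => ?_
    rw [hB, Matrix.mul_apply, Finset.mul_sum]
    refine Finset.sum_congr rfl fun m _ => ?_
    rw [Matrix.mul_apply, Finset.sum_eq_single (a • k' + b • l)]
    · rw [Matrix.mul_apply, Finset.sum_eq_single (a • k + b • l)]
      · simp; ring
      · intro x _ hx
        simp [hx]
      · simp
    · intro x _ hx
      simp [hx]
    · simp

lemma cv_Wz (a b c e : ZMod d) (k : Fin n) (s : ZMod d) (ρ σ : Mat d n) :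
    cv a b c e (Wz k s * ρ * (Wz k s)ᴴ) σ
      = Wz k (a * s) * cv a b c e ρ σ * (Wz k (a * s))ᴴ := by
  ext v w
  rw [Wz_conj]
  simp only [cv, Matrix.of_apply, Wz_conj, Finset.mul_sum, Finset.sum_mul]
  refine Finset.sum_congr rfl fun l _ => ?_
  have h : ch d (-(s * (a • v + b • l) k)) * ch d (s * (a • w + b • l) k)
      = ch d (-(a * s * v k)) * ch d (a * s * w k) := by
    rw [← ch_add, ← ch_add]
    congr 1
    simp only [Pi.add_apply, Pi.smul_apply, smul_eq_mul]
    ring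
  linear_combination (ρ (a • v + b • l) (a • w + b • l) *
    σ (c • v + e • l) (c • w + e • l)) * h

lemma cv_Wx (a b c e : ZMod d) (hdet : a * e - b * c ≠ 0) (k : Fin n) (s : ZMod d)
    (ρ σ : Mat d n) :
    cv a b c e (Wx k s * ρ * (Wx k s)ᴴ) σ
      = Wx k (e / (a * e - b * c) * s) * cv a b c e ρ σ *
        (Wx k (e / (a * e - b * c) * s))ᴴ := by
  ext v w
  rw [Wx_conj]
  simp only [cv, Matrix.of_apply, Wx_conj]
  refine Eq.trans ?_
    (Equiv.sum_comp (Equiv.addRight (Pi.single k (-c / (a * e - b * c) * s) : QV d n)) _)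
  refine Finset.sum_congr rfl fun l _ => ?_
  have h1 : ∀ v : QV d n, a • (v + Pi.single k (e / (a * e - b * c) * s)) +
      b • (l + Pi.single k (-c / (a * e - b * c) * s)) = a • v + b • l + Pi.single k s := by
    intro v
    have : (Pi.single k s : QV d n) = a • Pi.single k (e / (a * e - b * c) * s)
        + b • Pi.single k (-c / (a * e - b * c) * s) := by
      rw [← Pi.single_smul, ← Pi.single_smul, ← Pi.single_add]
      congr 1
      simp only [smul_eq_mul]
      field_simp
      ring
    rw [this, smul_add, smul_add]
    abel
  have h2 : ∀ v : QV d n, c • (v + Pi.single k (e / (a * e - b * c) * s)) +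
      e • (l + Pi.single k (-c / (a * e - b * c) * s)) = c • v + e • l := by
    intro v
    have : (0 : QV d n) = c • Pi.single k (e / (a * e - b * c) * s)
        + e • Pi.single k (-c / (a * e - b * c) * s) := by
      rw [← Pi.single_smul, ← Pi.single_smul, ← Pi.single_add]
      rw [← Pi.single_zero k]
      congr 1
      simp only [smul_eq_mul]
      ring
    rw [← add_zero (c • v + e • l), this, smul_add, smul_add]
    abel
  simp only [Equiv.coe_addRight, h1, h2]

lemma sum_relW_mono (W : ZMod d → Mat d n) (huni : ∀ s, (W s)ᴴ * W s = 1) (r : ZMod d)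
    (hr : r ≠ 0) {κ : Type*} [Fintype κ] (K : κ → Mat d n) (hK : ∑ k, (K k)ᴴ * K k = 1)
    (ρ ρ' : Mat d n) (hρ : ρ.PosDef) (hρ' : ρ'.PosDef)
    (h1 : ∑ k, K k * ρ * (K k)ᴴ = ρ')
    (h2 : ∀ s, ∑ k, K k * (W s * ρ * (W s)ᴴ) * (K k)ᴴ = W (r * s) * ρ' * (W (r * s))ᴴ) :
    ∑ s, relW ρ' (W s) ≤ ∑ s, relW ρ (W s) := by
  rw [← Equiv.sum_comp (Equiv.mulLeft₀ r hr) fun s => relW ρ' (W s)]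
  exact Finset.sum_le_sum fun s _ => relW_mono K hK ρ ρ' (W s) (W (r * s)) hρ hρ' (huni s)
    (huni _) h1 (h2 s)

lemma fisher_cv_le (a b c e : ZMod d) (ha : a ≠ 0) (hc : c ≠ 0) (he : e ≠ 0)
    (hdet : a * e - b * c ≠ 0) (ρ σ : Mat d n) (hσ : IsState d n σ) (hρpd : ρ.PosDef)
    (hσpd : σ.PosDef) : fisherTotal d n (cv a b c e ρ σ) ≤ fisherTotal d n ρ := by
  obtain ⟨K, hK, hcv⟩ := cv_kraus a b c e hdet σ hσ
  have hpd := cv_posDef a b c e ha hc ρ σ hρpd hσpd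
  rw [fisherTotal_eq, fisherTotal_eq]
  refine Finset.sum_le_sum fun k _ => add_le_add ?_ ?_
  · refine mul_le_mul_of_nonneg_left ?_ (by positivity)
    refine sum_relW_mono (Wx k) (Wx_uni k) (e / (a * e - b * c)) (div_ne_zero he hdet) K hK ρ _
      hρpd hpd (hcv ρ) fun s => ?_
    rw [hcv, cv_Wx a b c e hdet]
  · refine mul_le_mul_of_nonneg_left ?_ (by positivity)
    refine sum_relW_mono (Wz k) (Wz_uni k) a ha K hK ρ _ hρpd hpd (hcv ρ) fun s => ?_
    rw [hcv, cv_Wz]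

end concrete


/-- Convolution decreases the Fisher information: for positive
definite states `ρ, σ`, `J(ρ ⊠ σ) ≤ min{J(ρ), J(σ)}`. -/
theorem statement14 (d n : ℕ) [Fact (Nat.Prime d)] (hd : Odd d) (hn : 1 ≤ n)
    (g00 g01 g10 g11 : ZMod d) (h00 : g00 ≠ 0) (h01 : g01 ≠ 0)
    (h10 : g10 ≠ 0) (h11 : g11 ≠ 0) (hdet : g00 * g11 - g01 * g10 ≠ 0)
    (ρ σ : Mat d n) (hρ : IsState d n ρ) (hσ : IsState d n σ)
    (hρpd : ρ.PosDef) (hσpd : σ.PosDef) :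
    fisherTotal d n (conv d n g00 g01 g10 g11 ρ σ) ≤
      min (fisherTotal d n ρ) (fisherTotal d n σ) := by
  rw [conv_eq_cv g00 g01 g10 g11 hdet]
  refine le_min ?_ ?_
  · exact fisher_cv_le g00 g10 g01 g11 h00 h01 h11 (by rwa [mul_comm g10]) ρ σ hσ hρpd hσpd
  · rw [cv_swap]
    refine fisher_cv_le g01 g11 g00 g10 h01 h00 h10 ?_ σ ρ hρ hσpd hρpd
    intro h
    apply hdet
    linear_combination -h

end PaperQI
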